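/- (Support of the solution, nondivergent form) Let p ∈ (1,∞), l ∈ (0,p), n ∈ [1,∞) real, R ∈ (0,∞]. Let φ : ℝ → ℝ be continuous and odd with τφ(τ) > 0 for a.e. τ. Let a be locally absolutely continuous on (0,R) with a > 0 a.e., let δ_a(τ) := (n−1)a(τ)/τ − (1−1/p)a'(τ) satisfy δ_a > 0 a.e. with δ_a and δ_a^{−1/(p−1)} locally integrable on (0,R). Let h : (0,R) × ℝ² → ℝ be a Carathéodory function such that for some θ ∈ (0,1] and a non-negative measurable q locally integrable on (0,R): h(τ,λ₀,λ₁)λ₁ ≤ θ q(τ)|λ₀|^l |λ₁|^{p−l} + (1−θ) δ_a(τ)|λ₁|^p for all λ₀, λ₁ ∈ ℝ and a.e. τ. Assume K(s,r,q,δ_a) < ∞ for every 0 < s < r < R. Let u and Φ_p(u') be locally absolutely continuous on (0,R) and suppose u solves the nondivergent ODE: a(τ)(Φ_p(u'(τ)))' + (n−1)(a(τ)/τ)Φ_p(u'(τ)) − h(τ,u(τ),u'(τ)) + φ(u(τ)) = 0 for a.e. τ ∈ (0,R). If u(s) = 0 and u'(s) = 0 for some s ∈ (0,R), then u ≡ 0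 on [s,R). -/

import Mathlib

open MeasureTheory Set Filter
open scoped ENNReal

/-- `Φ_p(λ) = |λ|^{p-2} λ` for `λ ≠ 0`, and `Φ_p(0) = 0`. -/
noncomputable def PhiP (p x : ℝ) : ℝ := if x = 0 then 0 else |x| ^ (p - 2) * x

/-- `u` is absolutely continuous on `[s,t]` with a.e. derivative `u'`:
`u'` is integrable on `[s,t]` and the fundamental theorem of calculus holds. -/
def ACOn (u u' : ℝ → ℝ) (s t : ℝ) : Prop :=
  MeasureTheory.IntegrableOn u' (Set.Icc s t) ∧
    ∀ x ∈ Set.Icc s t, u x = u s + ∫ σ in s..x, u' σ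

/-- The Beesack–Das constant
`K(s,·,q,v) = ((p-l)/p)^{(p-l)/p} [∫_S q(t)^{p/l} v(t)^{-(p-l)/l}
  (∫_s^t v(σ)^{-1/(p-1)} dσ)^{p-1} dt]^{l/p}`, over a set `S`. -/
noncomputable def BDK (p l : ℝ) (q v : ℝ → ℝ) (s : ℝ) (S : Set ℝ) : ℝ≥0∞ :=
  ENNReal.ofReal (((p - l) / p) ^ ((p - l) / p)) *
    (∫⁻ t in S,
      ENNReal.ofReal (q t) ^ (p / l) * ENNReal.ofReal (v t) ^ (-((p - l) / l)) *
        (∫⁻ σ in Set.Ioc s t, ENNReal.ofReal (v σ) ^ (-(1 / (p - 1)))) ^ (p - 1)) ^ (l / p)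

/-- `δ_a(τ) = (n-1) a(τ)/τ - (1 - 1/p) a'(τ)`. -/
noncomputable def deltaA (n p : ℝ) (a a' : ℝ → ℝ) : ℝ → ℝ :=
  fun τ => (n - 1) * a τ / τ - (1 - 1 / p) * a' τ

/-- `d_a(τ) = (n-1) a(τ)/τ + (1/p) a'(τ)`. -/
noncomputable def dA (n p : ℝ) (a a' : ℝ → ℝ) : ℝ → ℝ :=
  fun τ => (n - 1) * a τ / τ + (1 / p) * a' τ

/-!
Testing the equation with `u'` shows that the energy `E = (1 - 1/p) a |u'|^p + ∫_0^u φ` satisfies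
`E' ≤ θ (q |u|^l |u'|^{p-l} - δ_a |u'|^p)`. From a common zero `s` of `u` and `u'` on, the
Beesack–Das inequality bounds the integral of the first term over `[s,r]` by a constant times that
of the second, and the constant tends to `0` as `r → s`. For `r` close to `s` this gives
`E(r) ≤ E(s) = 0`, so `∫_0^{u(r)} φ ≤ 0` and `u(r) = 0`. Hence the closed set of common zeros of `u`
and `u'` contains, with each of its points, an interval to the right of it.
-/

open Topology
open scoped NNReal

/-! ### Absolutely continuous functions -/

theorem absolutelyContinuousOnInterval_comp_of_locallyLipschitz {F X : Type*}
    [SeminormedAddCommGroup F] [PseudoMetricSpace X] {f : ℝ → F} {g : F → X} {a b : ℝ}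
    (hg : LocallyLipschitz g) (hf : AbsolutelyContinuousOnInterval f a b) :
    AbsolutelyContinuousOnInterval (fun x => g (f x)) a b := by
  obtain ⟨K, hK⟩ := (hg.locallyLipschitzOn (s := f '' uIcc a b)).exists_lipschitzOnWith_of_compact
    (isCompact_uIcc.image_of_continuousOn hf.continuousOn)
  unfold AbsolutelyContinuousOnInterval at hf ⊢
  have hbound := hf.const_mul (K : ℝ)
  rw [mul_zero] at hbound
  refine squeeze_zero' (.of_forall fun _ => Finset.sum_nonneg fun _ _ => dist_nonneg) ?_ hbound
  rw [eventually_inf_principal]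
  refine .of_forall fun E hE => ?_
  rw [Finset.mul_sum]
  exact Finset.sum_le_sum fun i hi => hK.dist_le_mul _ (mem_image_of_mem f (hE.1 i hi).1) _
    (mem_image_of_mem f (hE.1 i hi).2)

theorem absolutelyContinuousOnInterval_congr {X : Type*} [PseudoMetricSpace X] {f g : ℝ → X}
    {a b : ℝ} (hfg : EqOn f g (uIcc a b)) (hf : AbsolutelyContinuousOnInterval f a b) :
    AbsolutelyContinuousOnInterval g a b := by
  refine Tendsto.congr' ?_ hf
  refine eventually_inf_principal.2 (.of_forall fun E hE => Finset.sum_congr rfl fun i hi => ?_)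
  rw [hfg (hE.1 i hi).1, hfg (hE.1 i hi).2]

theorem sub_le_setIntegral_of_ae_hasDerivAt_le {f f' g : ℝ → ℝ} {a b : ℝ} (hab : a ≤ b)
    (hf : AbsolutelyContinuousOnInterval f a b)
    (hf' : ∀ᵐ t ∂volume.restrict (Icc a b), HasDerivAt f (f' t) t)
    (hg : IntegrableOn g (Icc a b)) (hle : ∀ᵐ t ∂volume.restrict (Icc a b), f' t ≤ g t) :
    f b - f a ≤ ∫ t in Ioc a b, g t := by
  rw [← hf.integral_deriv_eq_sub, ← intervalIntegral.integral_of_le hab]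
  refine intervalIntegral.integral_mono_ae_restrict hab hf.intervalIntegrable_deriv
    ((intervalIntegrable_iff_integrableOn_Icc_of_le hab).2 hg) ?_
  filter_upwards [hf', hle] with t ht hlet
  rwa [ht.deriv]

theorem nonneg_of_ae_nonneg_of_continuousOn_Icc {f : ℝ → ℝ} {a b : ℝ} (hab : a < b)
    (hf : ContinuousOn f (Icc a b)) (hnonneg : ∀ᵐ t ∂volume.restrict (Icc a b), 0 ≤ f t) :
    ∀ t ∈ Icc a b, 0 ≤ f t := by
  have habs : EqOn f (fun t => |f t|) (Icc a b) :=
    Measure.eqOn_Icc_of_ae_eq volume hab.ne (hnonneg.mono fun t ht => (abs_of_nonneg ht).symm)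
      hf hf.abs
  exact fun t ht => habs ht ▸ abs_nonneg (f t)

namespace ACOn

variable {u u' : ℝ → ℝ} {s r : ℝ}

theorem intervalIntegrable (hu : ACOn u u' s r) (hsr : s ≤ r) :
    IntervalIntegrable u' volume s r :=
  (intervalIntegrable_iff_integrableOn_Icc_of_le hsr).2 hu.1

theorem absolutelyContinuousOnInterval (hu : ACOn u u' s r) (hsr : s ≤ r) :
    AbsolutelyContinuousOnInterval u s r := by
  have hconst : AbsolutelyContinuousOnInterval (fun _ : ℝ => u s) s r :=
    contDiff_const.contDiffOn.absolutelyContinuousOnInterval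
  refine absolutelyContinuousOnInterval_congr (fun x hx => ?_) (hconst.add
    ((hu.intervalIntegrable hsr).absolutelyContinuousOnInterval_intervalIntegral left_mem_uIcc))
  rw [uIcc_of_le hsr] at hx
  exact (hu.2 x hx).symm

theorem continuousOn (hu : ACOn u u' s r) (hsr : s ≤ r) : ContinuousOn u (Icc s r) :=
  uIcc_of_le hsr ▸ (hu.absolutelyContinuousOnInterval hsr).continuousOn

theorem ae_hasDerivAt (hu : ACOn u u' s r) (hsr : s ≤ r) :
    ∀ᵐ t ∂volume.restrict (Icc s r), HasDerivAt u (u' t) t := by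
  rw [← restrict_Ioo_eq_restrict_Icc, ae_restrict_iff' measurableSet_Ioo]
  filter_upwards [(hu.intervalIntegrable hsr).ae_hasDerivAt_integral] with t ht htsr
  have hderiv := ht (uIcc_of_le hsr ▸ Ioo_subset_Icc_self htsr) s left_mem_uIcc
  refine (hderiv.const_add (u s)).congr_of_eventuallyEq ?_
  filter_upwards [Icc_mem_nhds htsr.1 htsr.2] with x hx using hu.2 x hx

theorem mono {s' r' : ℝ} (hu : ACOn u u' s r) (hs : s ≤ s') (hr : r' ≤ r) : ACOn u u' s' r' := by
  refine ⟨hu.1.mono_set (Icc_subset_Icc hs hr), fun x hx => ?_⟩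
  have hint : ∀ y ∈ Icc s r, IntervalIntegrable u' volume s y := fun y hy =>
    (intervalIntegrable_iff_integrableOn_Icc_of_le hy.1).2
      (hu.1.mono_set (Icc_subset_Icc_right hy.2))
  have hs' : s' ∈ Icc s r := ⟨hs, hx.1.trans (hx.2.trans hr)⟩
  have hx' : x ∈ Icc s r := ⟨hs.trans hx.1, hx.2.trans hr⟩
  rw [hu.2 x hx', hu.2 s' hs', add_assoc,
    intervalIntegral.integral_add_adjacent_intervals (hint s' hs')
      ((hint s' hs').symm.trans (hint x hx'))]

theorem derivative_eqOn_zero (hu : ACOn u u' s r) (hsr : s < r) (hu' : ContinuousOn u' (Icc s r))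
    (hzero : EqOn u 0 (Icc s r)) : EqOn u' 0 (Icc s r) := by
  refine Measure.eqOn_Icc_of_ae_eq volume hsr.ne ?_ hu' continuousOn_const
  have hderiv := hu.ae_hasDerivAt hsr.le
  rw [← restrict_Ioo_eq_restrict_Icc] at hderiv ⊢
  filter_upwards [hderiv, ae_restrict_mem measurableSet_Ioo] with t ht htsr
  refine ht.unique ((hasDerivAt_const t (0 : ℝ)).congr_of_eventuallyEq ?_)
  filter_upwards [Icc_mem_nhds htsr.1 htsr.2] with x hx using hzero hx

theorem ofReal_abs_le_lintegral (hu : ACOn u u' s r) (hus : u s = 0) {t : ℝ} (ht : t ∈ Icc s r) :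
    ENNReal.ofReal |u t| ≤ ∫⁻ σ in Ioc s t, ENNReal.ofReal |u' σ| := by
  rw [hu.2 t ht, hus, zero_add, intervalIntegral.integral_of_le ht.1]
  simpa only [← ofReal_norm, Real.norm_eq_abs] using
    enorm_integral_le_lintegral_enorm (μ := volume.restrict (Ioc s t)) u'

end ACOn

/-! ### Positivity of primitives -/

theorem intervalIntegral_pos_of_ae_pos {f : ℝ → ℝ} {a b : ℝ} (hab : a < b)
    (hf : IntervalIntegrable f volume a b) (hpos : ∀ᵐ t, t ∈ Ioc a b → 0 < f t) :
    0 < ∫ t in a..b, f t := by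
  have hpos' : ∀ᵐ t ∂volume.restrict (Ioc a b), 0 < f t :=
    (ae_restrict_iff' measurableSet_Ioc).2 hpos
  refine (intervalIntegral.integral_pos_iff_support_of_nonneg_ae' ?_ hf).2 ⟨hab, ?_⟩
  · rw [uIoc_of_le hab.le]
    exact hpos'.mono fun t ht => ht.le
  · have hsupport : (Ioc a b : Set ℝ) ≤ᵐ[volume] (Function.support f ∩ Ioc a b : Set ℝ) := by
      filter_upwards [hpos] with t ht htab using ⟨(ht htab).ne', htab⟩
    calc 0 < volume (Ioc a b) := by simpa using hab
      _ ≤ volume (Function.support f ∩ Ioc a b) := measure_mono_ae hsupport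

theorem intervalIntegral_zero_pos_of_ae_mul_pos {φ : ℝ → ℝ} (hφ : Continuous φ)
    (hsign : ∀ᵐ t, 0 < t * φ t) {x : ℝ} (hx : x ≠ 0) : 0 < ∫ t in (0 : ℝ)..x, φ t := by
  rcases hx.lt_or_gt with hneg | hpos
  · rw [intervalIntegral.integral_symm, ← intervalIntegral.integral_neg]
    refine intervalIntegral_pos_of_ae_pos hneg (hφ.neg.intervalIntegrable _ _) ?_
    filter_upwards [hsign] with t ht htx
    nlinarith [htx.2]
  · refine intervalIntegral_pos_of_ae_pos hpos (hφ.intervalIntegrable _ _) ?_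
    filter_upwards [hsign] with t ht htx
    exact pos_of_mul_pos_right ht htx.1.le

theorem contDiff_one_intervalIntegral {φ : ℝ → ℝ} (hφ : Continuous φ) (a : ℝ) :
    ContDiff ℝ 1 fun x => ∫ t in a..x, φ t := by
  refine contDiff_one_iff_deriv.2
    ⟨fun x => (hφ.integral_hasStrictDerivAt a x).hasDerivAt.differentiableAt, ?_⟩
  rwa [funext fun x => (hφ.integral_hasStrictDerivAt a x).hasDerivAt.deriv]

/-! ### The odd power `Φ_p` -/

section PhiP

variable {p p' : ℝ}

theorem PhiP_eq_abs_rpow_mul (p x : ℝ) : PhiP p x = |x| ^ (p - 2) * x := by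
  by_cases hx : x = 0 <;> simp [PhiP, hx]

theorem PhiP_zero (p : ℝ) : PhiP p 0 = 0 := if_pos rfl

theorem PhiP_mul_self (hp : p ≠ 0) (x : ℝ) : PhiP p x * x = |x| ^ p := by
  rcases eq_or_ne x 0 with rfl | hx
  · simp [Real.zero_rpow hp]
  · rw [PhiP_eq_abs_rpow_mul, mul_assoc, ← abs_mul_abs_self x, ← sq, ← Real.rpow_natCast,
      ← Real.rpow_add (abs_pos.2 hx)]
    norm_num

theorem abs_PhiP (hp : p ≠ 1) (x : ℝ) : |PhiP p x| = |x| ^ (p - 1) := by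
  rcases eq_or_ne x 0 with rfl | hx
  · simp [PhiP_zero, Real.zero_rpow (sub_ne_zero.2 hp)]
  · rw [PhiP_eq_abs_rpow_mul, abs_mul, abs_of_nonneg (Real.rpow_nonneg (abs_nonneg x) _),
      ← Real.rpow_add_one (abs_ne_zero.2 hx)]
    ring_nf

theorem abs_PhiP_rpow_of_holderConjugate (hpp' : p.HolderConjugate p') (x : ℝ) :
    |PhiP p x| ^ p' = |x| ^ p := by
  rw [abs_PhiP hpp'.lt.ne', ← Real.rpow_mul (abs_nonneg x), hpp'.sub_one_mul_conj]

theorem PhiP_PhiP_of_holderConjugate (hpp' : p.HolderConjugate p') (x : ℝ) :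
    PhiP p' (PhiP p x) = x := by
  rcases eq_or_ne x 0 with rfl | hx
  · simp only [PhiP_zero]
  · have hexp : (p - 1) * (p' - 2) + (p - 2) = 0 := by
      linear_combination hpp'.sub_one_mul_conj
    rw [PhiP_eq_abs_rpow_mul p', abs_PhiP hpp'.lt.ne', ← Real.rpow_mul (abs_nonneg x),
      PhiP_eq_abs_rpow_mul p, ← mul_assoc, ← Real.rpow_add (abs_pos.2 hx), hexp, Real.rpow_zero,
      one_mul]

theorem hasDerivAt_abs_rpow_PhiP (hp : 1 < p) (x : ℝ) :
    HasDerivAt (fun y : ℝ => |y| ^ p) (p * PhiP p x) x := by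
  simpa only [PhiP_eq_abs_rpow_mul, mul_assoc] using hasDerivAt_abs_rpow x hp

theorem contDiff_one_abs_rpow (hp : 1 < p) : ContDiff ℝ 1 fun x : ℝ => |x| ^ p := by
  simpa only [Real.norm_eq_abs] using contDiff_norm_rpow (E := ℝ) hp

theorem continuous_PhiP (hp : 1 < p) : Continuous (PhiP p) := by
  have hderiv : Continuous fun x => p * PhiP p x := by
    simpa only [funext fun x => (hasDerivAt_abs_rpow_PhiP hp x).deriv] using
      (contDiff_one_abs_rpow hp).continuous_deriv le_rfl
  exact (continuous_const_smul_iff₀ (zero_lt_one.trans hp).ne').1 hderiv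

theorem continuousOn_of_continuousOn_PhiP (hp : 1 < p) {w : ℝ → ℝ} {S : Set ℝ}
    (hw : ContinuousOn (fun t => PhiP p (w t)) S) : ContinuousOn w S := by
  have hpp' := Real.HolderConjugate.conjExponent hp
  simpa only [Function.comp_def, PhiP_PhiP_of_holderConjugate hpp'] using
    (continuous_PhiP hpp'.symm.lt).comp_continuousOn hw

theorem absolutelyContinuousOnInterval_abs_rpow_of_PhiP (hp : 1 < p) {w : ℝ → ℝ} {s r : ℝ}
    (hw : AbsolutelyContinuousOnInterval (fun t => PhiP p (w t)) s r) :
    AbsolutelyContinuousOnInterval (fun t => |w t| ^ p) s r := by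
  have hpp' := Real.HolderConjugate.conjExponent hp
  simpa only [abs_PhiP_rpow_of_holderConjugate hpp'] using
    absolutelyContinuousOnInterval_comp_of_locallyLipschitz
      (contDiff_one_abs_rpow hpp'.symm.lt).locallyLipschitz hw

theorem hasDerivAt_abs_rpow_of_PhiP (hpp' : p.HolderConjugate p') {w : ℝ → ℝ} {v t : ℝ}
    (hw : HasDerivAt (fun τ => PhiP p (w τ)) v t) :
    HasDerivAt (fun τ => |w τ| ^ p) (p' * w t * v) t := by
  simpa only [Function.comp_def, PhiP_PhiP_of_holderConjugate hpp',
    abs_PhiP_rpow_of_holderConjugate hpp'] using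
    (hasDerivAt_abs_rpow_PhiP hpp'.symm.lt (PhiP p (w t))).comp t hw

end PhiP
/-! ### The Beesack–Das inequality -/

theorem lintegral_mul_rpow_le_weighted {α : Type*} [MeasurableSpace α] {μ : Measure α} {p l : ℝ}
    (hl : 0 < l) (hlp : l < p) {g f V : α → ℝ≥0∞} (hg : AEMeasurable g μ) (hf : AEMeasurable f μ)
    (hV : AEMeasurable V μ) (hV0 : ∀ᵐ x ∂μ, V x ≠ 0 ∧ V x ≠ ⊤) :
    ∫⁻ x, g x * f x ^ (p - l) ∂μ ≤
      (∫⁻ x, g x ^ (p / l) * V x ^ (-((p - l) / l)) ∂μ) ^ (l / p) *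
        (∫⁻ x, V x * f x ^ p ∂μ) ^ ((p - l) / p) := by
  have hp : 0 < p := hl.trans hlp
  have hpl : 0 < p - l := sub_pos.2 hlp
  have hconj : (p / l).HolderConjugate (p / (p - l)) := by
    rw [Real.holderConjugate_iff, one_lt_div hl]
    refine ⟨hlp, ?_⟩
    field_simp
    ring
  have hsplit : ∀ᵐ x ∂μ, g x * f x ^ (p - l) =
      g x * V x ^ (-((p - l) / p)) * (V x * f x ^ p) ^ ((p - l) / p) := by
    filter_upwards [hV0] with x hx
    have hcancel : V x ^ (-((p - l) / p)) * V x ^ ((p - l) / p) = 1 := by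
      rw [← ENNReal.rpow_add _ _ hx.1 hx.2, neg_add_cancel, ENNReal.rpow_zero]
    rw [ENNReal.mul_rpow_of_nonneg _ _ (by positivity), ← ENNReal.rpow_mul,
      mul_div_cancel₀ _ hp.ne', mul_assoc, ← mul_assoc (V x ^ _), hcancel, one_mul]
  have hfirst : ∀ x, (g x * V x ^ (-((p - l) / p))) ^ (p / l) =
      g x ^ (p / l) * V x ^ (-((p - l) / l)) := fun x => by
    rw [ENNReal.mul_rpow_of_nonneg _ _ (by positivity), ← ENNReal.rpow_mul, neg_mul,
      div_mul_div_cancel₀ hp.ne']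
  have hsecond : ∀ x, ((V x * f x ^ p) ^ ((p - l) / p)) ^ (p / (p - l)) = V x * f x ^ p :=
    fun x => by rw [← ENNReal.rpow_mul, div_mul_div_cancel₀ hp.ne', div_self hpl.ne',
      ENNReal.rpow_one]
  rw [lintegral_congr_ae hsplit]
  simpa only [Pi.mul_apply, hfirst, hsecond, one_div_div] using
    ENNReal.lintegral_mul_le_Lp_mul_Lq μ hconj (hg.mul (hV.pow_const (-((p - l) / p))))
      ((hV.mul (hf.pow_const p)).pow_const ((p - l) / p))

theorem lintegral_le_weighted {α : Type*} [MeasurableSpace α] {μ : Measure α} {p : ℝ} (hp : 1 < p)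
    {f V : α → ℝ≥0∞} (hf : AEMeasurable f μ) (hV : AEMeasurable V μ)
    (hV0 : ∀ᵐ x ∂μ, V x ≠ 0 ∧ V x ≠ ⊤) :
    ∫⁻ x, f x ∂μ ≤ (∫⁻ x, V x ^ (-(1 / (p - 1))) ∂μ) ^ ((p - 1) / p) *
      (∫⁻ x, V x * f x ^ p ∂μ) ^ (1 / p) := by
  simpa using lintegral_mul_rpow_le_weighted (l := p - 1) (sub_pos.2 hp) (sub_one_lt p)
    (aemeasurable_const (b := 1)) hf hV hV0

/-- The integral `∫_s^r Q^{p/l} V^{-(p-l)/l} (∫_s^t V^{-1/(p-1)})^{p-1} dt` whose `l/p`-th power is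
the Beesack–Das constant `K(s,r,Q,V)` up to the factor `((p-l)/p)^{(p-l)/p}`. -/
noncomputable def beesackDasIntegral (p l : ℝ) (Q V : ℝ → ℝ≥0∞) (s r : ℝ) : ℝ≥0∞ :=
  ∫⁻ t in Ioc s r, Q t ^ (p / l) * V t ^ (-((p - l) / l)) *
    (∫⁻ σ in Ioc s t, V σ ^ (-(1 / (p - 1)))) ^ (p - 1)

section BeesackDas

variable {p l s r : ℝ}

theorem lintegral_Ioc_rpow_le_weighted (hp : 1 < p) (hl : 0 < l) {V f : ℝ → ℝ≥0∞}
    (hV : AEMeasurable V (volume.restrict (Ioc s r)))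
    (hf : AEMeasurable f (volume.restrict (Ioc s r)))
    (hV0 : ∀ᵐ t ∂volume.restrict (Ioc s r), V t ≠ 0 ∧ V t ≠ ⊤) {t : ℝ} (ht : t ∈ Ioc s r) :
    (∫⁻ σ in Ioc s t, f σ) ^ l ≤
      (∫⁻ σ in Ioc s t, V σ ^ (-(1 / (p - 1)))) ^ (l * ((p - 1) / p)) *
        (∫⁻ σ in Ioc s r, V σ * f σ ^ p) ^ (l / p) := by
  have hsub : Ioc s t ⊆ Ioc s r := Ioc_subset_Ioc_right ht.2
  set H := ∫⁻ σ in Ioc s t, V σ ^ (-(1 / (p - 1)))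
  calc (∫⁻ σ in Ioc s t, f σ) ^ l
      ≤ (H ^ ((p - 1) / p) * (∫⁻ σ in Ioc s t, V σ * f σ ^ p) ^ (1 / p)) ^ l := by
        gcongr
        exact lintegral_le_weighted hp (hf.mono_set hsub) (hV.mono_set hsub)
          (ae_restrict_of_ae_restrict_of_subset hsub hV0)
    _ ≤ (H ^ ((p - 1) / p) * (∫⁻ σ in Ioc s r, V σ * f σ ^ p) ^ (1 / p)) ^ l := by gcongr
    _ = H ^ (l * ((p - 1) / p)) * (∫⁻ σ in Ioc s r, V σ * f σ ^ p) ^ (l / p) := by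
        rw [ENNReal.mul_rpow_of_nonneg _ _ hl.le, ← ENNReal.rpow_mul, ← ENNReal.rpow_mul,
          mul_comm _ l, one_div_mul_eq_div]

theorem lintegral_mul_lintegral_rpow_mul_rpow_le (hp : 1 < p) (hl : 0 < l) (hlp : l < p)
    {Q V f : ℝ → ℝ≥0∞} (hQ : AEMeasurable Q (volume.restrict (Ioc s r)))
    (hV : AEMeasurable V (volume.restrict (Ioc s r)))
    (hf : AEMeasurable f (volume.restrict (Ioc s r)))
    (hV0 : ∀ᵐ t ∂volume.restrict (Ioc s r), V t ≠ 0 ∧ V t ≠ ⊤) :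
    ∫⁻ t in Ioc s r, Q t * (∫⁻ σ in Ioc s t, f σ) ^ l * f t ^ (p - l) ≤
      beesackDasIntegral p l Q V s r ^ (l / p) * ∫⁻ t in Ioc s r, V t * f t ^ p := by
  have hp0 : 0 < p := hl.trans hlp
  set Y := ∫⁻ t in Ioc s r, V t * f t ^ p
  set H : ℝ → ℝ≥0∞ := fun t => ∫⁻ σ in Ioc s t, V σ ^ (-(1 / (p - 1)))
  have hHmeas : Measurable H :=
    Monotone.measurable fun x y hxy => lintegral_mono_set (Ioc_subset_Ioc_right hxy)
  have hgmeas : AEMeasurable (fun t => Q t * H t ^ (l * ((p - 1) / p)))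
      (volume.restrict (Ioc s r)) := hQ.mul (hHmeas.pow_const _).aemeasurable
  have hpower : ∀ t, (Q t * H t ^ (l * ((p - 1) / p))) ^ (p / l) * V t ^ (-((p - l) / l)) =
      Q t ^ (p / l) * V t ^ (-((p - l) / l)) * H t ^ (p - 1) := fun t => by
    rw [ENNReal.mul_rpow_of_nonneg _ _ (by positivity), ← ENNReal.rpow_mul, mul_right_comm,
      show l * ((p - 1) / p) * (p / l) = p - 1 by field_simp]
  calc ∫⁻ t in Ioc s r, Q t * (∫⁻ σ in Ioc s t, f σ) ^ l * f t ^ (p - l)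
      ≤ ∫⁻ t in Ioc s r, Y ^ (l / p) * (Q t * H t ^ (l * ((p - 1) / p)) * f t ^ (p - l)) := by
        refine setLIntegral_mono_ae' measurableSet_Ioc (.of_forall fun t ht => ?_)
        rw [← mul_assoc, mul_left_comm, mul_comm (Y ^ _)]
        gcongr
        exact lintegral_Ioc_rpow_le_weighted hp hl hV hf hV0 ht
    _ = Y ^ (l / p) * ∫⁻ t in Ioc s r, Q t * H t ^ (l * ((p - 1) / p)) * f t ^ (p - l) :=
        lintegral_const_mul'' _ (hgmeas.mul (hf.pow_const _))
    _ ≤ Y ^ (l / p) * (beesackDasIntegral p l Q V s r ^ (l / p) * Y ^ ((p - l) / p)) := by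
        gcongr
        simpa only [beesackDasIntegral, hpower] using
          lintegral_mul_rpow_le_weighted hl hlp hgmeas hf hV hV0
    _ = beesackDasIntegral p l Q V s r ^ (l / p) * Y := by
        rw [mul_left_comm, ← ENNReal.rpow_add_of_nonneg _ _ (by positivity)
          (div_nonneg (sub_pos.2 hlp).le hp0.le), ← add_div, add_sub_cancel, div_self hp0.ne',
          ENNReal.rpow_one]

theorem ofReal_integral_le_lintegral_ofReal {α : Type*} [MeasurableSpace α] {μ : Measure α}
    (f : α → ℝ) : ENNReal.ofReal (∫ x, f x ∂μ) ≤ ∫⁻ x, ENNReal.ofReal (f x) ∂μ := by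
  by_cases hf : Integrable f μ
  · rw [integral_eq_lintegral_pos_part_sub_lintegral_neg_part hf]
    exact (ENNReal.ofReal_le_ofReal (sub_le_self _ ENNReal.toReal_nonneg)).trans
      ENNReal.ofReal_toReal_le
  · simp [integral_undef hf]

theorem ACOn.lintegral_mul_abs_rpow_mul_abs_rpow_le (hp : 1 < p) (hl : 0 < l) (hlp : l < p)
    {Q V : ℝ → ℝ≥0∞} {u u' : ℝ → ℝ} (hu : ACOn u u' s r) (hus : u s = 0)
    (hQ : AEMeasurable Q (volume.restrict (Ioc s r)))
    (hV : AEMeasurable V (volume.restrict (Ioc s r)))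
    (hV0 : ∀ᵐ t ∂volume.restrict (Ioc s r), V t ≠ 0 ∧ V t ≠ ⊤) :
    ∫⁻ t in Ioc s r, Q t * ENNReal.ofReal |u t| ^ l * ENNReal.ofReal |u' t| ^ (p - l) ≤
      beesackDasIntegral p l Q V s r ^ (l / p) *
        ∫⁻ t in Ioc s r, V t * ENNReal.ofReal |u' t| ^ p := by
  refine le_trans (setLIntegral_mono_ae' measurableSet_Ioc (.of_forall fun t ht => ?_))
    (lintegral_mul_lintegral_rpow_mul_rpow_le hp hl hlp hQ hV
      (hu.1.mono_set Ioc_subset_Icc_self).aemeasurable.abs.ennreal_ofReal hV0)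
  gcongr
  exact hu.ofReal_abs_le_lintegral hus (Ioc_subset_Icc_self ht)

theorem ACOn.integral_mul_abs_rpow_mul_abs_rpow_le (hp : 1 < p) (hl : 0 < l) (hlp : l < p)
    {q v u u' : ℝ → ℝ} {C : ℝ≥0} (hu : ACOn u u' s r) (hus : u s = 0)
    (hq : AEMeasurable q (volume.restrict (Ioc s r)))
    (hv : AEMeasurable v (volume.restrict (Ioc s r)))
    (hvpos : ∀ᵐ t ∂volume.restrict (Ioc s r), 0 < v t)
    (hvu' : IntegrableOn (fun t => v t * |u' t| ^ p) (Ioc s r))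
    (hC : beesackDasIntegral p l (fun t => ENNReal.ofReal (q t)) (fun t => ENNReal.ofReal (v t))
      s r ^ (l / p) ≤ C) :
    ∫ t in Ioc s r, q t * |u t| ^ l * |u' t| ^ (p - l) ≤
      C * ∫ t in Ioc s r, v t * |u' t| ^ p := by
  have hnonneg : 0 ≤ᵐ[volume.restrict (Ioc s r)] fun t => v t * |u' t| ^ p :=
    hvpos.mono fun t ht => mul_nonneg ht.le (Real.rpow_nonneg (abs_nonneg _) _)
  have hV0 : ∀ᵐ t ∂volume.restrict (Ioc s r),
      ENNReal.ofReal (v t) ≠ 0 ∧ ENNReal.ofReal (v t) ≠ ⊤ :=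
    hvpos.mono fun t ht => ⟨(ENNReal.ofReal_pos.2 ht).ne', ENNReal.ofReal_ne_top⟩
  have hinner : ∀ t, ENNReal.ofReal (q t * |u t| ^ l * |u' t| ^ (p - l)) =
      ENNReal.ofReal (q t) * ENNReal.ofReal |u t| ^ l * ENNReal.ofReal |u' t| ^ (p - l) :=
    fun t => by
      rw [ENNReal.ofReal_mul' (by positivity), ENNReal.ofReal_mul' (by positivity),
        ENNReal.ofReal_rpow_of_nonneg (abs_nonneg _) hl.le,
        ENNReal.ofReal_rpow_of_nonneg (abs_nonneg _) (sub_pos.2 hlp).le]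
  have houter : ∀ t, ENNReal.ofReal (v t * |u' t| ^ p) =
      ENNReal.ofReal (v t) * ENNReal.ofReal |u' t| ^ p := fun t => by
    rw [ENNReal.ofReal_mul' (by positivity),
      ENNReal.ofReal_rpow_of_nonneg (abs_nonneg _) (hl.trans hlp).le]
  refine (ENNReal.ofReal_le_ofReal_iff
    (mul_nonneg C.coe_nonneg (integral_nonneg_of_ae hnonneg))).1 ?_
  rw [ENNReal.ofReal_mul C.coe_nonneg, ENNReal.ofReal_coe_nnreal,
    ofReal_integral_eq_lintegral_ofReal hvu' hnonneg]
  refine (ofReal_integral_le_lintegral_ofReal _).trans ?_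
  simp only [hinner, houter]
  exact (hu.lintegral_mul_abs_rpow_mul_abs_rpow_le hp hl hlp hus hq.ennreal_ofReal
    hv.ennreal_ofReal hV0).trans (mul_le_mul_left hC _)

theorem beesackDasIntegral_ne_top_of_BDK_lt_top (hl : 0 < l) (hlp : l < p) {q v : ℝ → ℝ}
    (hK : BDK p l q v s (Ioc s r) < ⊤) :
    beesackDasIntegral p l (fun t => ENNReal.ofReal (q t)) (fun t => ENNReal.ofReal (v t)) s r ≠
      ⊤ := by
  have hp : 0 < p := hl.trans hlp
  have hconst : ENNReal.ofReal (((p - l) / p) ^ ((p - l) / p)) ≠ 0 :=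
    (ENNReal.ofReal_pos.2 (Real.rpow_pos_of_pos (div_pos (sub_pos.2 hlp) hp) _)).ne'
  intro htop
  change ENNReal.ofReal _ * beesackDasIntegral p l _ _ s r ^ (l / p) < ⊤ at hK
  rw [htop, ENNReal.top_rpow_of_pos (by positivity), ENNReal.mul_top hconst] at hK
  exact hK.ne rfl

theorem tendsto_setLIntegral_Ioc_nhdsGT {f : ℝ → ℝ≥0∞} (hsr : s < r)
    (hf : ∫⁻ t in Ioc s r, f t ≠ ⊤) :
    Tendsto (fun r' => ∫⁻ t in Ioc s r', f t) (𝓝[>] s) (𝓝 0) := by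
  have hmeasure : Tendsto (fun r' => volume.restrict (Ioc s r) (Ioc s r')) (𝓝[>] s) (𝓝 0) := by
    have hlength : Tendsto (fun r' => ENNReal.ofReal (r' - s)) (𝓝[>] s) (𝓝 0) :=
      ((ENNReal.continuous_ofReal.comp (continuous_sub_right s)).tendsto' s 0
        (by simp)).mono_left nhdsWithin_le_nhds
    refine tendsto_of_tendsto_of_tendsto_of_le_of_le tendsto_const_nhds hlength
      (fun _ => zero_le) fun r' => ?_
    exact (Measure.restrict_apply_le _ _).trans Real.volume_Ioc.le
  refine (tendsto_setLIntegral_zero hf hmeasure).congr' ?_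
  filter_upwards [Ioc_mem_nhdsGT hsr] with r' hr'
  rw [Measure.restrict_restrict measurableSet_Ioc,
    inter_eq_left.2 (Ioc_subset_Ioc_right hr'.2)]

theorem monotone_beesackDasIntegral (p l : ℝ) (Q V : ℝ → ℝ≥0∞) (s : ℝ) :
    Monotone (beesackDasIntegral p l Q V s) :=
  fun _ _ h => lintegral_mono_set (Ioc_subset_Ioc_right h)

end BeesackDas

/-! ### The energy of a solution -/

/-- The energy `(1 - 1/p) a |u'|^p + ∫_0^u φ` of `u`; for `a` constant it is conserved by the
equation `a (Φ_p(u'))' + φ(u) = 0`. -/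
noncomputable def energy (p : ℝ) (φ a u u' : ℝ → ℝ) (t : ℝ) : ℝ :=
  (1 - 1 / p) * (a t * |u' t| ^ p) + ∫ x in (0 : ℝ)..u t, φ x

section Energy

variable {p : ℝ} {φ a u u' : ℝ → ℝ}

theorem absolutelyContinuousOnInterval_energy (hp : 1 < p) (hφ : Continuous φ) {s r : ℝ}
    (ha : AbsolutelyContinuousOnInterval a s r) (hu : AbsolutelyContinuousOnInterval u s r)
    (hflux : AbsolutelyContinuousOnInterval (fun t => PhiP p (u' t)) s r) :
    AbsolutelyContinuousOnInterval (energy p φ a u u') s r := by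
  have hkinetic : AbsolutelyContinuousOnInterval
      (fun t => (1 - 1 / p) * (a t * |u' t| ^ p)) s r :=
    (ha.fun_mul (absolutelyContinuousOnInterval_abs_rpow_of_PhiP hp hflux)).const_mul _
  have hpotential : AbsolutelyContinuousOnInterval (fun t => ∫ x in (0 : ℝ)..u t, φ x) s r :=
    absolutelyContinuousOnInterval_comp_of_locallyLipschitz
      (g := fun y => ∫ x in (0 : ℝ)..y, φ x)
      (contDiff_one_intervalIntegral hφ 0).locallyLipschitz hu
  exact hkinetic.fun_add hpotential

theorem hasDerivAt_energy (hp : 1 < p) (hφ : Continuous φ) {a₁ v t : ℝ} (ha : HasDerivAt a a₁ t)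
    (hu : HasDerivAt u (u' t) t) (hflux : HasDerivAt (fun τ => PhiP p (u' τ)) v t) :
    HasDerivAt (energy p φ a u u')
      ((1 - 1 / p) * a₁ * |u' t| ^ p + (a t * v + φ (u t)) * u' t) t := by
  have hpp' := Real.HolderConjugate.conjExponent hp
  have hcoeff : (1 - 1 / p) * p.conjExponent = 1 := by
    rw [one_div, hpp'.one_sub_inv, inv_mul_cancel₀ hpp'.symm.ne_zero]
  have hkinetic : HasDerivAt (fun τ => (1 - 1 / p) * (a τ * |u' τ| ^ p))
      ((1 - 1 / p) * (a₁ * |u' t| ^ p + a t * (p.conjExponent * u' t * v))) t :=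
    (ha.fun_mul (hasDerivAt_abs_rpow_of_PhiP hpp' hflux)).const_mul _
  have hpotential : HasDerivAt (fun τ => ∫ x in (0 : ℝ)..u τ, φ x) (φ (u t) * u' t) t :=
    (hφ.integral_hasStrictDerivAt 0 (u t)).hasDerivAt.comp t hu
  refine (hkinetic.fun_add hpotential).congr_deriv ?_
  linear_combination (a t * v * u' t) * hcoeff

theorem energy_eq_zero (hp : p ≠ 0) {t : ℝ} (hu : u t = 0) (hu' : u' t = 0) :
    energy p φ a u u' t = 0 := by
  simp [energy, hu, hu', Real.zero_rpow hp]

theorem integral_le_energy (hp : 1 ≤ p) {t : ℝ} (ha : 0 ≤ a t) :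
    ∫ x in (0 : ℝ)..u t, φ x ≤ energy p φ a u u' t := by
  have hcoeff : 0 ≤ 1 - 1 / p := by
    rw [sub_nonneg]
    exact (div_le_one (zero_lt_one.trans_le hp)).2 hp
  exact le_add_of_nonneg_left (by positivity)

end Energy

theorem integrableOn_deltaA {n p s r : ℝ} {a a' : ℝ → ℝ} (hs : 0 < s) (hsr : s ≤ r)
    (ha : ACOn a a' s r) : IntegrableOn (deltaA n p a a') (Icc s r) := by
  have hcont : ContinuousOn (fun τ => (n - 1) * a τ / τ) (Icc s r) :=
    (continuousOn_const.mul (ha.continuousOn hsr)).div continuousOn_id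
      fun τ hτ => (hs.trans_le hτ.1).ne'
  exact hcont.integrableOn_Icc.sub (ha.1.const_mul _)

/-- The energy inequality on `[s,r]`, with `(a, a')`, `(u, u')` and `(Φ_p(u'), v')` absolutely
continuous functions and their derivatives: the derivative of `energy p φ a u u'` is at most
`θ (q |u|^l |u'|^{p-l} - δ |u'|^p)`. For `δ = deltaA n p a a'` this is what the nondivergent
equation multiplied by `u'` gives under the growth condition on `h`. -/
structure EnergyInequalityOn (p l θ : ℝ) (φ a a' q δ u u' v' : ℝ → ℝ) (s r : ℝ) : Prop where
  coeff : ACOn a a' s r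
  coeff_nonneg : ∀ᵐ τ ∂volume.restrict (Icc s r), 0 ≤ a τ
  potential : IntegrableOn q (Icc s r)
  weight : IntegrableOn δ (Icc s r)
  weight_pos : ∀ᵐ τ ∂volume.restrict (Icc s r), 0 < δ τ
  solution : ACOn u u' s r
  flux : ACOn (fun τ => PhiP p (u' τ)) v' s r
  deriv_le : ∀ᵐ τ ∂volume.restrict (Icc s r),
    (1 - 1 / p) * a' τ * |u' τ| ^ p + (a τ * v' τ + φ (u τ)) * u' τ ≤
      θ * (q τ * |u τ| ^ l * |u' τ| ^ (p - l) - δ τ * |u' τ| ^ p)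

namespace EnergyInequalityOn

variable {p l θ s r : ℝ} {φ a a' q δ u u' v' : ℝ → ℝ}

theorem mono (h : EnergyInequalityOn p l θ φ a a' q δ u u' v' s r) {s' r' : ℝ} (hs : s ≤ s')
    (hr : r' ≤ r) : EnergyInequalityOn p l θ φ a a' q δ u u' v' s' r' where
  coeff := h.coeff.mono hs hr
  coeff_nonneg := ae_restrict_of_ae_restrict_of_subset (Icc_subset_Icc hs hr) h.coeff_nonneg
  potential := h.potential.mono_set (Icc_subset_Icc hs hr)
  weight := h.weight.mono_set (Icc_subset_Icc hs hr)
  weight_pos := ae_restrict_of_ae_restrict_of_subset (Icc_subset_Icc hs hr) h.weight_pos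
  solution := h.solution.mono hs hr
  flux := h.flux.mono hs hr
  deriv_le := ae_restrict_of_ae_restrict_of_subset (Icc_subset_Icc hs hr) h.deriv_le

theorem continuousOn_derivative (h : EnergyInequalityOn p l θ φ a a' q δ u u' v' s r)
    (hp : 1 < p) (hsr : s ≤ r) : ContinuousOn u' (Icc s r) :=
  continuousOn_of_continuousOn_PhiP hp (h.flux.continuousOn hsr)

theorem integrableOn_dissipation (h : EnergyInequalityOn p l θ φ a a' q δ u u' v' s r)
    (hp : 1 < p) (hsr : s ≤ r) : IntegrableOn (fun t => δ t * |u' t| ^ p) (Icc s r) :=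
  h.weight.mul_continuousOn ((h.continuousOn_derivative hp hsr).abs.rpow_const
    fun _ _ => Or.inr (zero_lt_one.trans hp).le) isCompact_Icc

theorem integrableOn_growth (h : EnergyInequalityOn p l θ φ a a' q δ u u' v' s r)
    (hp : 1 < p) (hl : 0 ≤ l) (hlp : l ≤ p) (hsr : s ≤ r) :
    IntegrableOn (fun t => q t * |u t| ^ l * |u' t| ^ (p - l)) (Icc s r) := by
  simpa only [mul_assoc] using h.potential.mul_continuousOn
    (((h.solution.continuousOn hsr).abs.rpow_const fun _ _ => Or.inr hl).fun_mul
      ((h.continuousOn_derivative hp hsr).abs.rpow_const fun _ _ => Or.inr (sub_nonneg.2 hlp)))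
    isCompact_Icc

theorem energy_sub_le (h : EnergyInequalityOn p l θ φ a a' q δ u u' v' s r) (hp : 1 < p)
    (hφ : Continuous φ) (hl : 0 ≤ l) (hlp : l ≤ p) (hsr : s ≤ r) :
    energy p φ a u u' r - energy p φ a u u' s ≤
      θ * ((∫ t in Ioc s r, q t * |u t| ^ l * |u' t| ^ (p - l)) -
        ∫ t in Ioc s r, δ t * |u' t| ^ p) := by
  have hgrowth := h.integrableOn_growth hp hl hlp hsr
  have hdissipation := h.integrableOn_dissipation hp hsr
  have henergy := absolutelyContinuousOnInterval_energy hp hφ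
    (h.coeff.absolutelyContinuousOnInterval hsr) (h.solution.absolutelyContinuousOnInterval hsr)
    (h.flux.absolutelyContinuousOnInterval hsr)
  rw [← integral_sub (hgrowth.mono_set Ioc_subset_Icc_self)
    (hdissipation.mono_set Ioc_subset_Icc_self), ← integral_const_mul]
  refine sub_le_setIntegral_of_ae_hasDerivAt_le hsr henergy ?_
    ((hgrowth.sub hdissipation).const_mul θ) h.deriv_le
  filter_upwards [h.coeff.ae_hasDerivAt hsr, h.solution.ae_hasDerivAt hsr,
    h.flux.ae_hasDerivAt hsr] with t ha hu hflux using hasDerivAt_energy hp hφ ha hu hflux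

theorem solution_right_eq_zero (h : EnergyInequalityOn p l θ φ a a' q δ u u' v' s r)
    (hp : 1 < p) (hl : 0 < l) (hlp : l < p) (hθ : 0 ≤ θ) (hφ : Continuous φ)
    (hsign : ∀ᵐ x, 0 < x * φ x) (hsr : s < r) (hus : u s = 0) (hu's : u' s = 0)
    (hK : beesackDasIntegral p l (fun t => ENNReal.ofReal (q t)) (fun t => ENNReal.ofReal (δ t))
      s r ≤ 1) : u r = 0 := by
  have hp0 : 0 < p := hl.trans hlp
  have hBeesackDas : ∫ t in Ioc s r, q t * |u t| ^ l * |u' t| ^ (p - l) ≤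
      ∫ t in Ioc s r, δ t * |u' t| ^ p := by
    simpa using h.solution.integral_mul_abs_rpow_mul_abs_rpow_le (C := 1) hp hl hlp hus
      (h.potential.mono_set Ioc_subset_Icc_self).aemeasurable
      (h.weight.mono_set Ioc_subset_Icc_self).aemeasurable
      (ae_restrict_of_ae_restrict_of_subset Ioc_subset_Icc_self h.weight_pos)
      ((h.integrableOn_dissipation hp hsr.le).mono_set Ioc_subset_Icc_self)
      (ENNReal.rpow_le_one hK (by positivity))
  have ha : 0 ≤ a r := nonneg_of_ae_nonneg_of_continuousOn_Icc hsr (h.coeff.continuousOn hsr.le)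
    h.coeff_nonneg r (right_mem_Icc.2 hsr.le)
  by_contra hur
  refine (intervalIntegral_zero_pos_of_ae_mul_pos hφ hsign hur).not_ge ?_
  calc ∫ x in (0 : ℝ)..u r, φ x
      ≤ energy p φ a u u' r - energy p φ a u u' s := by
        rw [energy_eq_zero hp0.ne' hus hu's, sub_zero]
        exact integral_le_energy hp.le ha
    _ ≤ θ * ((∫ t in Ioc s r, q t * |u t| ^ l * |u' t| ^ (p - l)) -
          ∫ t in Ioc s r, δ t * |u' t| ^ p) := h.energy_sub_le hp hφ hl.le hlp.le hsr.le
    _ ≤ 0 := mul_nonpos_of_nonneg_of_nonpos hθ (sub_nonpos.2 hBeesackDas)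

theorem eqOn_zero_of_beesackDasIntegral_le_one
    (h : EnergyInequalityOn p l θ φ a a' q δ u u' v' s r) (hp : 1 < p) (hl : 0 < l) (hlp : l < p)
    (hθ : 0 ≤ θ) (hφ : Continuous φ) (hsign : ∀ᵐ x, 0 < x * φ x) (hsr : s < r) (hus : u s = 0)
    (hu's : u' s = 0)
    (hK : beesackDasIntegral p l (fun t => ENNReal.ofReal (q t)) (fun t => ENNReal.ofReal (δ t))
      s r ≤ 1) : EqOn u 0 (Icc s r) ∧ EqOn u' 0 (Icc s r) := by
  have hu : EqOn u 0 (Icc s r) := by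
    rintro t ⟨hst, htr⟩
    rcases hst.eq_or_lt with rfl | hst
    · exact hus
    · exact (h.mono le_rfl htr).solution_right_eq_zero hp hl hlp hθ hφ hsign hst hus hu's
        ((monotone_beesackDasIntegral p l _ _ s htr).trans hK)
  exact ⟨hu, h.solution.derivative_eqOn_zero hsr (h.continuousOn_derivative hp hsr.le) hu⟩

theorem eqOn_zero (h : EnergyInequalityOn p l θ φ a a' q δ u u' v' s r) (hp : 1 < p) (hl : 0 < l)
    (hlp : l < p) (hθ : 0 ≤ θ) (hφ : Continuous φ) (hsign : ∀ᵐ x, 0 < x * φ x) (hsr : s ≤ r)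
    (hus : u s = 0) (hu's : u' s = 0)
    (hK : ∀ x ∈ Ico s r, beesackDasIntegral p l (fun t => ENNReal.ofReal (q t))
      (fun t => ENNReal.ofReal (δ t)) x r ≠ ⊤) : EqOn u 0 (Icc s r) := by
  set Z : Set ℝ := {t | u t = 0 ∧ u' t = 0}
  have hclosed : IsClosed (Z ∩ Icc s r) := by
    have hpreimage := ((h.solution.continuousOn hsr).prodMk
      (h.continuousOn_derivative hp hsr)).preimage_isClosed_of_isClosed isClosed_Icc
        (isClosed_singleton (x := ((0 : ℝ), (0 : ℝ))))
    convert hpreimage using 1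
    ext t
    simp [Z, and_comm]
  suffices hZ : Icc s r ⊆ Z from fun t ht => (hZ ht).1
  refine hclosed.Icc_subset_of_forall_mem_nhdsWithin ⟨hus, hu's⟩ ?_
  rintro x ⟨⟨hux, hu'x⟩, hsx, hxr⟩
  have hsmall := (tendsto_setLIntegral_Ioc_nhdsGT hxr (hK x ⟨hsx, hxr⟩)).eventually_le_const
    zero_lt_one
  obtain ⟨r', hr', hxr', hr'r⟩ := (hsmall.and (Ioc_mem_nhdsGT hxr)).exists
  obtain ⟨hu, hu'⟩ := (h.mono hsx hr'r).eqOn_zero_of_beesackDasIntegral_le_one hp hl hlp hθ hφ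
    hsign hxr' hux hu'x hr'
  filter_upwards [Icc_mem_nhdsGT hxr'] with t ht using ⟨hu ht, hu' ht⟩

end EnergyInequalityOn

/-! ### The nondivergent equation -/

theorem energy_deriv_le_of_equation {p l n θ τ q₀ u₀ u₁ v₀ h₀ φ₀ : ℝ} {a a' : ℝ → ℝ} (hp : p ≠ 0)
    (heq : a τ * v₀ + (n - 1) * (a τ / τ) * PhiP p u₁ - h₀ + φ₀ = 0)
    (hgrowth : h₀ * u₁ ≤
      θ * q₀ * |u₀| ^ l * |u₁| ^ (p - l) + (1 - θ) * deltaA n p a a' τ * |u₁| ^ p) :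
    (1 - 1 / p) * a' τ * |u₁| ^ p + (a τ * v₀ + φ₀) * u₁ ≤
      θ * (q₀ * |u₀| ^ l * |u₁| ^ (p - l) - deltaA n p a a' τ * |u₁| ^ p) := by
  have htested : (1 - 1 / p) * a' τ * |u₁| ^ p + (a τ * v₀ + φ₀) * u₁ =
      h₀ * u₁ - deltaA n p a a' τ * |u₁| ^ p := by
    rw [deltaA]
    linear_combination u₁ * heq - (n - 1) * (a τ / τ) * PhiP_mul_self hp u₁
  linarith

theorem support_nondivergent_general (p l n : ℝ) (R : ℝ≥0∞)
    (hp : 1 < p) (hl0 : 0 < l) (hlp : l < p)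
    (φ : ℝ → ℝ) (hφcont : Continuous φ) (hφsign : ∀ᵐ τ ∂(volume : Measure ℝ), 0 < τ * φ τ)
    (a a' : ℝ → ℝ)
    (haAC : ∀ s r : ℝ, 0 < s → s ≤ r → ENNReal.ofReal r < R → ACOn a a' s r)
    (q : ℝ → ℝ)
    (ha : ∀ᵐ τ ∂(volume.restrict {τ : ℝ | 0 < τ ∧ ENNReal.ofReal τ < R}), 0 ≤ a τ)
    (hvpos : ∀ᵐ τ ∂(volume.restrict {τ : ℝ | 0 < τ ∧ ENNReal.ofReal τ < R}), 0 < deltaA n p a a' τ)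
    (hqint : ∀ s r : ℝ, 0 < s → s ≤ r → ENNReal.ofReal r < R → IntegrableOn q (Icc s r))
    (h : ℝ → ℝ → ℝ → ℝ) (θ : ℝ) (hθ : 0 ≤ θ)
    (hgrowth : ∀ᵐ τ ∂(volume.restrict {τ : ℝ | 0 < τ ∧ ENNReal.ofReal τ < R}),
      ∀ lam₀ lam₁ : ℝ, h τ lam₀ lam₁ * lam₁ ≤
        θ * q τ * |lam₀| ^ l * |lam₁| ^ (p - l) + (1 - θ) * deltaA n p a a' τ * |lam₁| ^ p)
    (hK : ∀ s r : ℝ, 0 < s → s < r → ENNReal.ofReal r < R →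
      BDK p l q (deltaA n p a a') s (Ioc s r) < ⊤)
    (u u' v' : ℝ → ℝ)
    (huAC : ∀ s r : ℝ, 0 < s → s ≤ r → ENNReal.ofReal r < R → ACOn u u' s r)
    (hvAC : ∀ s r : ℝ, 0 < s → s ≤ r → ENNReal.ofReal r < R →
      ACOn (fun τ => PhiP p (u' τ)) v' s r)
    (hODE : ∀ᵐ τ ∂(volume.restrict {τ : ℝ | 0 < τ ∧ ENNReal.ofReal τ < R}),
      a τ * v' τ + (n - 1) * (a τ / τ) * PhiP p (u' τ) - h τ (u τ) (u' τ) + φ (u τ) = 0)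
    (s : ℝ) (hs : 0 < s) (hus : u s = 0) (hu's : u' s = 0) (r : ℝ) (hsr : s ≤ r)
    (hrR : ENNReal.ofReal r < R) : u r = 0 := by
  have hsub : Icc s r ⊆ {τ : ℝ | 0 < τ ∧ ENNReal.ofReal τ < R} := fun τ hτ =>
    ⟨hs.trans_le hτ.1, (ENNReal.ofReal_le_ofReal hτ.2).trans_lt hrR⟩
  have hderiv := (hgrowth.and hODE).mono fun τ hτ =>
    energy_deriv_le_of_equation (zero_lt_one.trans hp).ne' hτ.2 (hτ.1 (u τ) (u' τ))
  have henergy : EnergyInequalityOn p l θ φ a a' q (deltaA n p a a') u u' v' s r :=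
    { coeff := haAC s r hs hsr hrR
      coeff_nonneg := ae_restrict_of_ae_restrict_of_subset hsub ha
      potential := hqint s r hs hsr hrR
      weight := integrableOn_deltaA hs hsr (haAC s r hs hsr hrR)
      weight_pos := ae_restrict_of_ae_restrict_of_subset hsub hvpos
      solution := huAC s r hs hsr hrR
      flux := hvAC s r hs hsr hrR
      deriv_le := ae_restrict_of_ae_restrict_of_subset hsub hderiv }
  exact henergy.eqOn_zero hp hl0 hlp hθ hφcont hφsign hsr hus hu's
    (fun x hx => beesackDasIntegral_ne_top_of_BDK_lt_top hl0 hlp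
      (hK x r (hs.trans_le hx.1) hx.2 hrR)) (right_mem_Icc.2 hsr)

/-- **Support of the solution (nondivergent form)**. -/
theorem support_nondivergent
    (p l n : ℝ) (R : ℝ≥0∞)
    (hp : 1 < p) (hl0 : 0 < l) (hlp : l < p) (hn : 1 ≤ n) (hR : 0 < R)
    (φ : ℝ → ℝ) (hφcont : Continuous φ) (hφodd : ∀ t : ℝ, φ (-t) = -φ t)
    (hφsign : ∀ᵐ τ ∂(volume : Measure ℝ), 0 < τ * φ τ)
    (a a' : ℝ → ℝ)
    (haAC : ∀ s r : ℝ, 0 < s → s ≤ r → ENNReal.ofReal r < R → ACOn a a' s r)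
    (q : ℝ → ℝ) (hqmeas : Measurable q)
    (hapos : ∀ᵐ τ ∂(volume.restrict {τ : ℝ | 0 < τ ∧ ENNReal.ofReal τ < R}), 0 < a τ)
    (hvpos : ∀ᵐ τ ∂(volume.restrict {τ : ℝ | 0 < τ ∧ ENNReal.ofReal τ < R}), 0 < deltaA n p a a' τ)
    (hvint : ∀ s r : ℝ, 0 < s → s ≤ r → ENNReal.ofReal r < R →
      IntegrableOn (deltaA n p a a') (Set.Icc s r) ∧
        IntegrableOn (fun τ => deltaA n p a a' τ ^ (-(1 / (p - 1)))) (Set.Icc s r))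
    (hqint : ∀ s r : ℝ, 0 < s → s ≤ r → ENNReal.ofReal r < R → IntegrableOn q (Set.Icc s r))
    (h : ℝ → ℝ → ℝ → ℝ)
    (hhmeas : ∀ lam₀ lam₁ : ℝ, Measurable fun τ => h τ lam₀ lam₁)
    (hhcont : ∀ τ : ℝ, Continuous fun z : ℝ × ℝ => h τ z.1 z.2)
    (θ : ℝ) (hθ0 : 0 < θ) (hθ1 : θ ≤ 1)
    (hq0 : ∀ᵐ τ ∂(volume.restrict {τ : ℝ | 0 < τ ∧ ENNReal.ofReal τ < R}), 0 ≤ q τ)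
    (hgrowth : ∀ᵐ τ ∂(volume.restrict {τ : ℝ | 0 < τ ∧ ENNReal.ofReal τ < R}),
      ∀ lam₀ lam₁ : ℝ, h τ lam₀ lam₁ * lam₁ ≤
        θ * q τ * |lam₀| ^ l * |lam₁| ^ (p - l) + (1 - θ) * deltaA n p a a' τ * |lam₁| ^ p)
    (hK : ∀ s r : ℝ, 0 < s → s < r → ENNReal.ofReal r < R →
      BDK p l q (deltaA n p a a') s (Set.Ioc s r) < ⊤)
    (u u' v' : ℝ → ℝ)
    (huAC : ∀ s r : ℝ, 0 < s → s ≤ r → ENNReal.ofReal r < R → ACOn u u' s r)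
    (hvAC : ∀ s r : ℝ, 0 < s → s ≤ r → ENNReal.ofReal r < R →
      ACOn (fun τ => PhiP p (u' τ)) v' s r)
    (hODE : ∀ᵐ τ ∂(volume.restrict {τ : ℝ | 0 < τ ∧ ENNReal.ofReal τ < R}),
      a τ * v' τ + (n - 1) * (a τ / τ) * PhiP p (u' τ)
        - h τ (u τ) (u' τ) + φ (u τ) = 0) :
    ∀ s : ℝ, 0 < s → ENNReal.ofReal s < R → u s = 0 → u' s = 0 →
      ∀ τ : ℝ, s ≤ τ → ENNReal.ofReal τ < R → u τ = 0 :=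
  fun s hs _ => support_nondivergent_general p l n R hp hl0 hlp φ hφcont hφsign a a' haAC q
    (hapos.mono fun _ => le_of_lt) hvpos hqint h θ hθ0.le hgrowth hK u u' v' huAC hvAC hODE s hs
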